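/- Let Ω ⊆ ℝ^m be an open connected set, let α ∈ (1/2, 1], and let f, g : Ω → ℝ^{2n+1} be locally α-Hölder continuous as maps into ℍ^n (with respect to the Korányi metric). If the first 2n components of f and g agree, i.e. f^{x_j} = g^{x_j} and f^{y_j} = g^{y_j} on Ω for j = 1, …, n, then there is a constant c ∈ ℝ such that g^t(x) = f^t(x) + c for all x ∈ Ω, where f^t, g^t denote the last components. -/

import Mathlib

/-!
The vertical part of `q⁻¹ * p` is bounded by `dK n p q ^ 2`, and in the difference of two such parts
with the same horizontal data the bilinear terms cancel. Hence the increment of `g^t - f^t` between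
two points is at most the sum of the squared Korányi increments of `f` and `g`. Local `α`-Hölder
continuity makes this `O(|x - p| ^ (2 * α))` with `2 * α > 1`, so `g^t - f^t` has zero derivative.
-/

open Metric Set MeasureTheory Topology

/-- The index of the coordinate `x_j` in `ℝ^{2n+1}`. -/
def xI (n : ℕ) (j : Fin n) : Fin (2*n+1) := ⟨2*j.1, by have := j.2; omega⟩

/-- The index of the coordinate `y_j` in `ℝ^{2n+1}`. -/
def yI (n : ℕ) (j : Fin n) : Fin (2*n+1) := ⟨2*j.1+1, by have := j.2; omega⟩

/-- The index of the coordinate `t` in `ℝ^{2n+1}`. -/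
def tI (n : ℕ) : Fin (2*n+1) := Fin.last (2*n)

/-- The Korányi metric on the Heisenberg group `ℍ^n = ℝ^{2n+1}`:
`d_K(p,q) = (|z-z'|^4 + |t - t' + 2 ∑_j (x_j' y_j - x_j y_j')|^2)^{1/4}`. -/
noncomputable def dK (n : ℕ) (p q : EuclideanSpace ℝ (Fin (2*n+1))) : ℝ :=
  ((∑ i : Fin (2*n), (p (Fin.castSucc i) - q (Fin.castSucc i)) ^ 2) ^ 2 +
    (p (tI n) - q (tI n) +
      2 * ∑ j : Fin n, (q (xI n j) * p (yI n j) - p (xI n j) * q (yI n j))) ^ 2) ^ ((1:ℝ)/4)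

open Asymptotics

section VerticalPart

variable {n : ℕ} {p q p' q' : EuclideanSpace ℝ (Fin (2 * n + 1))}

/-- The last coordinate of `q⁻¹ * p` for the group law of `ℍ^n` whose last coordinate is
`t + t' + 2 * ∑ j, (y_j * x_j' - x_j * y_j')`; it is the vertical part of the Korányi metric. -/
def verticalPart (n : ℕ) (p q : EuclideanSpace ℝ (Fin (2 * n + 1))) : ℝ :=
  p (tI n) - q (tI n) + 2 * ∑ j : Fin n, (q (xI n j) * p (yI n j) - p (xI n j) * q (yI n j))

theorem dK_nonneg (p q : EuclideanSpace ℝ (Fin (2 * n + 1))) : 0 ≤ dK n p q :=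
  Real.rpow_nonneg (by positivity) _

theorem dK_pow_four (p q : EuclideanSpace ℝ (Fin (2 * n + 1))) :
    dK n p q ^ 4 =
      (∑ i : Fin (2 * n), (p i.castSucc - q i.castSucc) ^ 2) ^ 2 + verticalPart n p q ^ 2 := by
  rw [dK, one_div]
  exact Real.rpow_inv_natCast_pow (by positivity) four_ne_zero

theorem abs_verticalPart_le_dK_sq (p q : EuclideanSpace ℝ (Fin (2 * n + 1))) :
    |verticalPart n p q| ≤ dK n p q ^ 2 := by
  refine abs_le_of_sq_le_sq ?_ (sq_nonneg _)
  calc verticalPart n p q ^ 2 ≤ dK n p q ^ 4 := by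
        rw [dK_pow_four]
        exact le_add_of_nonneg_left (sq_nonneg _)
    _ = (dK n p q ^ 2) ^ 2 := by ring

theorem verticalPart_sub_verticalPart_of_horizontal_eq
    (hp : ∀ j, p (xI n j) = p' (xI n j) ∧ p (yI n j) = p' (yI n j))
    (hq : ∀ j, q (xI n j) = q' (xI n j) ∧ q (yI n j) = q' (yI n j)) :
    verticalPart n p' q' - verticalPart n p q =
      (p' (tI n) - p (tI n)) - (q' (tI n) - q (tI n)) := by
  simp only [verticalPart, hp, hq]
  ring

theorem abs_vertical_sub_le_dK_sq_add_dK_sq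
    (hp : ∀ j, p (xI n j) = p' (xI n j) ∧ p (yI n j) = p' (yI n j))
    (hq : ∀ j, q (xI n j) = q' (xI n j) ∧ q (yI n j) = q' (yI n j)) :
    |(p' (tI n) - p (tI n)) - (q' (tI n) - q (tI n))| ≤ dK n p q ^ 2 + dK n p' q' ^ 2 := by
  rw [← verticalPart_sub_verticalPart_of_horizontal_eq hp hq, abs_sub_comm]
  exact (abs_sub _ _).trans
    (add_le_add (abs_verticalPart_le_dK_sq p q) (abs_verticalPart_le_dK_sq p' q'))

end VerticalPart

section Exponent

variable {E : Type*} [SeminormedAddCommGroup E]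

theorem isLittleO_norm_sub_rpow_sub (x₀ : E) {r : ℝ} (hr : 1 < r) :
    (fun x => ‖x - x₀‖ ^ r) =o[𝓝 x₀] fun x => x - x₀ := by
  have h_zero : (fun s : ℝ => s ^ r) =o[𝓝 0] fun s => s := by
    simpa [Real.zero_rpow (zero_lt_one.trans hr).ne', Real.zero_rpow (sub_pos.2 hr).ne'] using
      (Real.hasDerivAt_rpow_const (x := 0) (Or.inr hr.le)).isLittleO
  exact (h_zero.comp_tendsto (tendsto_norm_sub_self x₀)).of_norm_right

theorem isLittleO_pow_of_isBigO_norm_sub_rpow {𝕜 : Type*} [NormedDivisionRing 𝕜] {u : E → 𝕜}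
    {l : Filter E} {x₀ : E} {α : ℝ} {k : ℕ} (hl : l ≤ 𝓝 x₀) (hα : 1 < α * k)
    (hu : u =O[l] fun x => ‖x - x₀‖ ^ α) :
    (fun x => u x ^ k) =o[l] fun x => x - x₀ := by
  have h_pow : (fun x => u x ^ k) =O[l] fun x => ‖x - x₀‖ ^ (α * k) := by
    simpa only [← Real.rpow_mul_natCast (norm_nonneg _)] using hu.pow k
  exact h_pow.trans_isLittleO ((isLittleO_norm_sub_rpow_sub x₀ hα).mono hl)

end Exponent

section Maps

variable {E : Type*} {n : ℕ} {Ω : Set E} {p : E} {f g : E → EuclideanSpace ℝ (Fin (2 * n + 1))}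

theorem dK_sq_isLittleO_of_locally_holder [SeminormedAddCommGroup E] {α : ℝ} (hα : 1 / 2 < α)
    (hp : p ∈ Ω)
    (hf : ∃ r : ℝ, 0 < r ∧ ∃ C : ℝ, ∀ x ∈ ball p r ∩ Ω, ∀ y ∈ ball p r ∩ Ω,
      dK n (f x) (f y) ≤ C * dist x y ^ α) :
    (fun x => dK n (f x) (f p) ^ 2) =o[𝓝[Ω] p] fun x => x - p := by
  obtain ⟨r, hr, C, hC⟩ := hf
  have h_bigO : (fun x => dK n (f x) (f p)) =O[𝓝[Ω] p] fun x => ‖x - p‖ ^ α := by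
    refine .of_bound C ?_
    filter_upwards [inter_mem_nhdsWithin Ω (ball_mem_nhds p hr)] with x hx
    rw [Real.norm_of_nonneg (dK_nonneg _ _), Real.norm_of_nonneg (by positivity), ← dist_eq_norm]
    exact hC x hx.symm p ⟨mem_ball_self hr, hp⟩
  exact isLittleO_pow_of_isBigO_norm_sub_rpow nhdsWithin_le_nhds (by push_cast; linarith) h_bigO

variable [NormedAddCommGroup E] [NormedSpace ℝ E]

theorem hasFDerivWithinAt_vertical_sub_of_horizontal_eq (hp : p ∈ Ω)
    (hf : (fun x => dK n (f x) (f p) ^ 2) =o[𝓝[Ω] p] fun x => x - p)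
    (hg : (fun x => dK n (g x) (g p) ^ 2) =o[𝓝[Ω] p] fun x => x - p)
    (hxy : ∀ x ∈ Ω, ∀ j, f x (xI n j) = g x (xI n j) ∧ f x (yI n j) = g x (yI n j)) :
    HasFDerivWithinAt (fun x => g x (tI n) - f x (tI n)) (0 : E →L[ℝ] ℝ) Ω p := by
  refine .of_isLittleO (IsBigO.trans_isLittleO (.of_bound 1 ?_) (hf.add hg))
  filter_upwards [self_mem_nhdsWithin] with x hx
  have h_le := abs_vertical_sub_le_dK_sq_add_dK_sq (hxy x hx) (hxy p hp)
  simpa using h_le.trans (le_abs_self _)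

/-- The hypotheses on `f` and `g` say `dK n (f x) (f p) = o(|x - p| ^ (1/2))`, in squared form. -/
theorem stmt13_general (hΩ : IsOpen Ω) (hconn : IsPreconnected Ω)
    (hf : ∀ p ∈ Ω, (fun x => dK n (f x) (f p) ^ 2) =o[𝓝[Ω] p] fun x => x - p)
    (hg : ∀ p ∈ Ω, (fun x => dK n (g x) (g p) ^ 2) =o[𝓝[Ω] p] fun x => x - p)
    (hxy : ∀ x ∈ Ω, ∀ j, f x (xI n j) = g x (xI n j) ∧ f x (yI n j) = g x (yI n j)) :
    ∃ c : ℝ, ∀ x ∈ Ω, g x (tI n) = f x (tI n) + c := by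
  have h_deriv (p : E) (hp : p ∈ Ω) :
      HasFDerivWithinAt (fun x => g x (tI n) - f x (tI n)) (0 : E →L[ℝ] ℝ) Ω p :=
    hasFDerivWithinAt_vertical_sub_of_horizontal_eq hp (hf p hp) (hg p hp) hxy
  obtain ⟨c, hc⟩ := hΩ.exists_is_const_of_fderiv_eq_zero hconn
    (fun p hp => (h_deriv p hp).differentiableWithinAt)
    (fun p hp => ((h_deriv p hp).hasFDerivAt (hΩ.mem_nhds hp)).fderiv)
  exact ⟨c, fun x hx => eq_add_of_sub_eq' (hc x hx)⟩

end Maps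

/-- Corollary 8.7 of the paper. Two locally `α`-Hölder maps into
`ℍ^n`, `1/2 < α ≤ 1`, on a connected open set, whose first `2n` components agree, differ
in the last component by an additive constant. -/
theorem stmt13 (m n : ℕ) (Ω : Set (EuclideanSpace ℝ (Fin m)))
    (hΩ : IsOpen Ω) (hconn : IsConnected Ω) (α : ℝ) (hα : 1/2 < α) (hα1 : α ≤ 1)
    (f g : EuclideanSpace ℝ (Fin m) → EuclideanSpace ℝ (Fin (2*n+1)))
    (hf : ∀ p ∈ Ω, ∃ r : ℝ, 0 < r ∧ ∃ C : ℝ, ∀ x ∈ ball p r ∩ Ω, ∀ y ∈ ball p r ∩ Ω,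
        dK n (f x) (f y) ≤ C * dist x y ^ α)
    (hg : ∀ p ∈ Ω, ∃ r : ℝ, 0 < r ∧ ∃ C : ℝ, ∀ x ∈ ball p r ∩ Ω, ∀ y ∈ ball p r ∩ Ω,
        dK n (g x) (g y) ≤ C * dist x y ^ α)
    (hxy : ∀ x ∈ Ω, ∀ j : Fin n, f x (xI n j) = g x (xI n j) ∧ f x (yI n j) = g x (yI n j)) :
    ∃ c : ℝ, ∀ x ∈ Ω, g x (tI n) = f x (tI n) + c :=
  stmt13_general hΩ hconn.isPreconnected
    (fun p hp => dK_sq_isLittleO_of_locally_holder hα hp (hf p hp))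
    (fun p hp => dK_sq_isLittleO_of_locally_holder hα hp (hg p hp)) hxy
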